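/- arXiv:2107.10294 — 3 statements merged into one kernel-verified Lean document; each statement's English description precedes it below -/
import Mathlib

section
/- Optimality in Theorem 1 (Estimator 2): for every α : ι → ℝ with α_l + σ² > 0 for all l and Σ_{l∈ι} c_l / √(α_l + σ²) = z, one has Σ_{l∈ι} α_l ≥ Σ_{l∈ι} α̂_l; that is, the candidate α̂ is a global minimizer of problem (19). -/
/-!
Lagrangian duality for a separable convex problem. Put `x l = √(α l + σ2)`, `a l = (c l) ^ (1/3)`,
`S = ∑ a l ^ 2` and `K = S / z`. With the multiplier `2 * K ^ 3`, the function
`x ↦ x ^ 2 + 2 * K ^ 3 * a ^ 3 / x` on `x > 0` has minimum `3 * (K * a) ^ 2`, attained at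
`x = K * a` (`three_mul_sq_le`, which is AM-GM). Summing over `l` and using the constraint
`∑ a l ^ 3 / x l = z` together with `K * z = S` gives `∑ x l ^ 2 ≥ 3 * K ^ 2 * S - 2 * K ^ 3 * z`,
and the right-hand side is `K ^ 2 * S`.
-/

open Finset

/-- AM-GM for `x ^ 2`, `t ^ 3 / x`, `t ^ 3 / x`, with equality at `x = t`. -/
lemma three_mul_sq_le {x t : ℝ} (hx : 0 < x) (ht : 0 ≤ t) :
    3 * t ^ 2 ≤ x ^ 2 + 2 * (t ^ 3 / x) := by
  have h : x ^ 2 + 2 * (t ^ 3 / x) - 3 * t ^ 2 = (x - t) ^ 2 * (x + 2 * t) / x := by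
    field_simp
    ring
  have : 0 ≤ (x - t) ^ 2 * (x + 2 * t) / x := by positivity
  linarith

/-- Optimality in Theorem 1 (Estimator 2): the candidate `α̂` is a global minimizer
of problem (19): any feasible `α` has `∑ α̂ l ≤ ∑ α l`. -/
theorem estimator2_optimality {ι : Type*} [Fintype ι] [Nonempty ι]
    (c : ι → ℝ) (hc : ∀ l, 0 < c l) (z : ℝ) (hz : 0 < z) (σ2 : ℝ)
    (α : ι → ℝ) (hα : ∀ l, 0 < α l + σ2)
    (hconstr : (∑ l : ι, c l / Real.sqrt (α l + σ2)) = z) :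
    (∑ l : ι, (((∑ l' : ι, (c l') ^ ((2 : ℝ) / 3)) / z) ^ 2 * (c l) ^ ((2 : ℝ) / 3) - σ2))
      ≤ ∑ l : ι, α l := by
  set S : ℝ := ∑ l' : ι, (c l') ^ ((2 : ℝ) / 3) with hS
  have hS0 : 0 ≤ S := Finset.sum_nonneg fun l _ => Real.rpow_nonneg (hc l).le _
  set K : ℝ := S / z with hK
  have hK0 : 0 ≤ K := div_nonneg hS0 hz.le
  have hKz : K * z = S := div_mul_cancel₀ S hz.ne'
  have key : ∀ l, 3 * K ^ 2 * (c l) ^ ((2 : ℝ) / 3)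
      ≤ (α l + σ2) + 2 * K ^ 3 * (c l / Real.sqrt (α l + σ2)) := by
    intro l
    have h := three_mul_sq_le (Real.sqrt_pos.2 (hα l))
      (mul_nonneg hK0 (Real.rpow_nonneg (hc l).le ((1 : ℝ) / 3)))
    have h2 : ((c l) ^ ((1 : ℝ) / 3)) ^ 2 = (c l) ^ ((2 : ℝ) / 3) := by
      rw [← Real.rpow_mul_natCast (hc l).le]
      norm_num
    have h3 : ((c l) ^ ((1 : ℝ) / 3)) ^ 3 = c l := by
      rw [← Real.rpow_mul_natCast (hc l).le]
      norm_num
    rw [Real.sq_sqrt (hα l).le, mul_pow, mul_pow, h2, h3, mul_div_assoc] at h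
    linarith
  have hsum := Finset.sum_le_sum fun l (_ : l ∈ Finset.univ) => key l
  rw [← Finset.mul_sum, Finset.sum_add_distrib, ← Finset.mul_sum, hconstr, ← hS,
    Finset.sum_add_distrib] at hsum
  rw [Finset.sum_sub_distrib, ← Finset.mul_sum, ← hS]
  have hmult : K ^ 3 * z = K ^ 2 * S := by
    rw [← hKz]
    ring
  linarith
end

section
/- Optimal value in Theorem 1: the candidate minimizer satisfies Σ_{l∈ι} α̂_l = (Σ_{l∈ι} c_l^{2/3})³ / z² − |ι| · σ²; equivalently, in the substituted variables x_l = α̂_l + σ², the minimum of Σ_{l∈ι} x_l over all positive x satisfying Σ_{l∈ι} c_l / √(x_l) = z equals (Σ_{l∈ι} c_l^{2/3})³ / z². -/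
/-!
Write `c l = a l ^ 3`, `S = ∑ a l ^ 2`, `t = S / z` and `u l = √(x l)`. The minimizer is
`u l = t * a l`, and minimality comes from the weighted AM-GM inequality
`u ^ 2 + 2 * m ^ 3 / u ≥ 3 * m ^ 2` at `u = u l`, `m = t * a l`: the constraint says that the
`a l ^ 3 / u l` sum to `z`, so summing gives `∑ x l + 2 * t ^ 3 * z ≥ 3 * t ^ 2 * S`, that is `∑ x l ≥ S ^ 3 / z ^ 2`.
-/

open Finset

/-- AM-GM for `u ^ 2`, `m ^ 3 / u`, `m ^ 3 / u`; equality holds at `u = m`. -/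
theorem three_mul_sq_le_s4 {u m : ℝ} (hu : 0 < u) (hm : 0 < m) :
    3 * m ^ 2 ≤ u ^ 2 + 2 * (m ^ 3 / u) := by
  have h : u ^ 2 + 2 * (m ^ 3 / u) - 3 * m ^ 2 = (u - m) ^ 2 * (u + 2 * m) / u := by
    field_simp
    ring
  have h' : 0 ≤ (u - m) ^ 2 * (u + 2 * m) / u := by positivity
  linarith

/-- Optimal value in Theorem 1: the candidate minimizer satisfies
`∑ α̂_l = (∑ c_l^{2/3})³ / z² − |ι| σ²`; equivalently, in the variables
`x_l = α̂_l + σ²`, the minimum of `∑ x_l` over positive `x` with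
`∑ c_l / √(x_l) = z` equals `(∑ c_l^{2/3})³ / z²`. -/
theorem estimator2_optimal_value {ι : Type*} [Fintype ι] [Nonempty ι]
    (c : ι → ℝ) (hc : ∀ l, 0 < c l) (z : ℝ) (hz : 0 < z) (σ2 : ℝ) :
    (∑ l : ι, (((∑ l' : ι, (c l') ^ ((2 : ℝ) / 3)) / z) ^ 2 * (c l) ^ ((2 : ℝ) / 3) - σ2))
        = (∑ l : ι, (c l) ^ ((2 : ℝ) / 3)) ^ 3 / z ^ 2 - (Fintype.card ι : ℝ) * σ2
    ∧ IsLeast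
        {s : ℝ | ∃ x : ι → ℝ, (∀ l, 0 < x l) ∧ (∑ l : ι, c l / Real.sqrt (x l)) = z
          ∧ s = ∑ l : ι, x l}
        ((∑ l : ι, (c l) ^ ((2 : ℝ) / 3)) ^ 3 / z ^ 2) := by
  obtain ⟨a, ha, hca, hc2⟩ : ∃ a : ι → ℝ, (∀ l, 0 < a l) ∧ (∀ l, c l = a l ^ 3) ∧
      ∀ l, c l ^ ((2 : ℝ) / 3) = a l ^ 2 := by
    refine ⟨fun l => c l ^ ((1 : ℝ) / 3), fun l => Real.rpow_pos_of_pos (hc l) _,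
      fun l => ?_, fun l => ?_⟩
    · rw [← Real.rpow_natCast, ← Real.rpow_mul (hc l).le]
      norm_num
    · rw [← Real.rpow_natCast, ← Real.rpow_mul (hc l).le]
      norm_num
  simp only [hc2]
  simp only [hca]
  have hS : 0 < ∑ l, a l ^ 2 :=
    Finset.sum_pos (fun l _ => pow_pos (ha l) 2) Finset.univ_nonempty
  set S := ∑ l, a l ^ 2 with hSdef
  have ht : 0 < S / z := div_pos hS hz
  have hsum : ∑ l, (S / z) ^ 2 * a l ^ 2 = S ^ 3 / z ^ 2 := by
    rw [← Finset.mul_sum, ← hSdef]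
    ring
  refine ⟨?_, ⟨fun l => (S / z) ^ 2 * a l ^ 2, fun l => ?_, ?_, hsum.symm⟩, ?_⟩
  · rw [Finset.sum_sub_distrib, hsum]
    simp
  · have := ha l
    positivity
  · have h : ∀ l, a l ^ 3 / √((S / z) ^ 2 * a l ^ 2) = z / S * a l ^ 2 := fun l => by
      have := ha l
      rw [← mul_pow, Real.sqrt_sq (by positivity)]
      field_simp
    simp only [h]
    rw [← Finset.mul_sum, ← hSdef]
    field_simp
  · rintro s ⟨x, hx, hxz, rfl⟩
    have h : ∀ l, 3 * ((S / z) ^ 2 * a l ^ 2) ≤ x l + 2 * (S / z) ^ 3 * (a l ^ 3 / √(x l)) :=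
      fun l => by
        have h1 := three_mul_sq_le_s4 (Real.sqrt_pos.2 (hx l)) (mul_pos ht (ha l))
        rw [Real.sq_sqrt (hx l).le] at h1
        calc _ = 3 * (S / z * a l) ^ 2 := by ring
          _ ≤ _ := h1
          _ = _ := by ring
    have h2 := Finset.sum_le_sum fun l (_ : l ∈ Finset.univ) => h l
    rw [← Finset.mul_sum, hsum, Finset.sum_add_distrib, ← Finset.mul_sum, hxz] at h2
    have h3 : 2 * (S / z) ^ 3 * z = 2 * (S ^ 3 / z ^ 2) := by field_simp
    linarith
end

section
/- Uniqueness of the minimizer in Theorem 1: if α : ι → ℝ satisfies α_l + σ² > 0 for all l, Σ_{l∈ι} c_l / √(α_l + σ²) = z, and Σ_{l∈ι} α_l = Σ_{l∈ι} α̂_l, then α_l = α̂_l for every l ∈ ι. -/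
/-!
Put `s l = √(α l + σ²)`, `b l = c l ^ (1/3)` and `t = (∑ b²) / z`, so that the candidate is
`α̂ l + σ² = (t * b l)²`. The Lagrangian gap of the `l`-th coordinate, with multiplier `2 t³`, is
`s² + 2 t³ c / s - 3 t² b² = (s - t b)² (s + 2 t b) / s`, which is nonnegative and vanishes only
for `s = t b`. The constraint and the equality of the objective values make these gaps sum to
`0`, hence every one of them is `0`.
-/

open Finset

/-- Uniqueness of the minimizer in Theorem 1: any feasible `α` attaining the
optimal value `∑ α̂_l` coincides with the candidate `α̂` componentwise. -/
theorem estimator2_unique_minimizer {ι : Type*} [Fintype ι] [Nonempty ι]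
    (c : ι → ℝ) (hc : ∀ l, 0 < c l) (z : ℝ) (hz : 0 < z) (σ2 : ℝ)
    (α : ι → ℝ) (hα : ∀ l, 0 < α l + σ2)
    (hconstr : (∑ l : ι, c l / Real.sqrt (α l + σ2)) = z)
    (hval : (∑ l : ι, α l)
      = ∑ l : ι, (((∑ l' : ι, (c l') ^ ((2 : ℝ) / 3)) / z) ^ 2 * (c l) ^ ((2 : ℝ) / 3) - σ2)) :
    ∀ l : ι, α l
      = ((∑ l' : ι, (c l') ^ ((2 : ℝ) / 3)) / z) ^ 2 * (c l) ^ ((2 : ℝ) / 3) - σ2 := by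
  set B : ℝ := ∑ l' : ι, (c l') ^ ((2 : ℝ) / 3) with hB
  have hBpos : 0 < B :=
    Finset.sum_pos (fun l _ => Real.rpow_pos_of_pos (hc l) _) Finset.univ_nonempty
  set t : ℝ := B / z with ht
  have htpos : 0 < t := div_pos hBpos hz
  have htz : t * z = B := div_mul_cancel₀ B hz.ne'
  have hb : ∀ l, 0 < (c l) ^ ((1 : ℝ) / 3) := fun l => Real.rpow_pos_of_pos (hc l) _
  have hb2 : ∀ l, (c l) ^ ((2 : ℝ) / 3) = ((c l) ^ ((1 : ℝ) / 3)) ^ 2 := fun l => by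
    rw [← Real.rpow_natCast, ← Real.rpow_mul (hc l).le]; norm_num
  have hb3 : ∀ l, c l = ((c l) ^ ((1 : ℝ) / 3)) ^ 3 := fun l => by
    rw [← Real.rpow_natCast, ← Real.rpow_mul (hc l).le]; norm_num
  have hs : ∀ l, 0 < √(α l + σ2) := fun l => Real.sqrt_pos.2 (hα l)
  have hs2 : ∀ l, √(α l + σ2) ^ 2 = α l + σ2 := fun l => Real.sq_sqrt (hα l).le
  have hgap : ∀ l, (α l + σ2) + 2 * t ^ 3 * (c l / √(α l + σ2))
        - 3 * t ^ 2 * (c l) ^ ((2 : ℝ) / 3)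
      = (√(α l + σ2) - t * (c l) ^ ((1 : ℝ) / 3)) ^ 2
        * ((√(α l + σ2) + 2 * (t * (c l) ^ ((1 : ℝ) / 3))) / √(α l + σ2)) := fun l => by
    have h := (hs l).ne'
    have e2 := hs2 l
    have e3 := hb3 l
    rw [hb2 l]
    generalize (c l) ^ ((1 : ℝ) / 3) = b at e3 ⊢
    generalize √(α l + σ2) = s at h e2 ⊢
    rw [← e2, e3]
    field_simp
    ring
  have hfac : ∀ l, 0 < (√(α l + σ2) + 2 * (t * (c l) ^ ((1 : ℝ) / 3))) / √(α l + σ2) :=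
    fun l => div_pos (by have := hs l; have := mul_pos htpos (hb l); linarith) (hs l)
  have hsum : ∑ l, ((α l + σ2) + 2 * t ^ 3 * (c l / √(α l + σ2))
      - 3 * t ^ 2 * (c l) ^ ((2 : ℝ) / 3)) = 0 := by
    rw [Finset.sum_sub_distrib, Finset.sum_add_distrib, Finset.sum_add_distrib,
      ← Finset.mul_sum, ← Finset.mul_sum, hconstr, hval, Finset.sum_sub_distrib,
      ← Finset.mul_sum, ← hB]
    linear_combination 2 * t ^ 2 * htz
  intro l
  have h0 := (Finset.sum_eq_zero_iff_of_nonneg (fun l _ => by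
    rw [hgap l]; exact mul_nonneg (sq_nonneg _) (hfac l).le)).1 hsum l (Finset.mem_univ l)
  rw [hgap l] at h0
  have h1 : √(α l + σ2) = t * (c l) ^ ((1 : ℝ) / 3) :=
    sub_eq_zero.1 (pow_eq_zero_iff two_ne_zero |>.1
      ((mul_eq_zero.1 h0).resolve_right (hfac l).ne'))
  have h2 := hs2 l
  rw [h1] at h2
  rw [hb2 l]
  linear_combination -h2
end
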